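/- arXiv:2102.06695 — 3 statements merged into one kernel-verified Lean document; each statement's English description precedes it below -/
import Mathlib

section
/- Jensen inequality for the inverse quadratic form (direction of the RFF bias for the data-fit term, Theorem 2, first inequality, finite-mixture form): Let ι be a nonempty finite index set, let (K_i)_{i∈ι} be n×n real symmetric positive definite matrices, let (w_i)_{i∈ι} be nonnegative real weights with Σ_{i∈ι} w_i = 1, and let y ∈ ℝⁿ. Then the averaged matrix Σ_{i∈ι} w_i·K_i is positive definite and yᵀ(Σ_{i∈ι} w_i·K_i)⁻¹ y ≤ Σ_{i∈ι} w_i · yᵀK_i⁻¹y. Hence a random positive definite kernel approximation K̃ with finitely many values and mean E[K̃] = K̂ satisfies E[yᵀK̃⁻¹y] ≥ yᵀK̂⁻¹y, i.e. it overestimates the inverse quadratic term in expectation. -/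
open Matrix Finset

/-! The block matrix `[A, 1; 1, A⁻¹]` is positive semidefinite because the Schur complement of `A`
in it vanishes. Such matrices form a convex cone, so averaging these blocks gives the positive
semidefinite matrix `[∑ wᵢ Aᵢ, 1; 1, ∑ wᵢ Aᵢ⁻¹]`; the Schur complement of its upper left block says
that `(∑ wᵢ Aᵢ)⁻¹ ≤ ∑ wᵢ Aᵢ⁻¹` in the Loewner order. -/

section FromBlocks

variable {ι l m n o α : Type*} [AddCommMonoid α]

theorem sum_fromBlocks (s : Finset ι) (A : ι → Matrix n l α) (B : ι → Matrix n m α)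
    (C : ι → Matrix o l α) (D : ι → Matrix o m α) :
    ∑ i ∈ s, fromBlocks (A i) (B i) (C i) (D i) =
      fromBlocks (∑ i ∈ s, A i) (∑ i ∈ s, B i) (∑ i ∈ s, C i) (∑ i ∈ s, D i) := by
  ext (j | j) (k | k) <;> simp [Matrix.sum_apply]

end FromBlocks

section WeightedSum

variable {ι m α R : Type*} [CommSemiring α] [PartialOrder α] [StarRing α] [StarOrderedRing α]
  [Ring R] [PartialOrder R] [StarRing R] [AddLeftMono R] [Algebra α R] [StarModule α R]
  {s : Finset ι} {w : ι → α} {A : ι → Matrix m m R}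

theorem posSemidef_sum_smul [PosSMulMono α R] (hA : ∀ i ∈ s, (A i).PosSemidef)
    (hw : ∀ i ∈ s, 0 ≤ w i) : (∑ i ∈ s, w i • A i).PosSemidef :=
  posSemidef_sum s fun i hi ↦ (hA i hi).smul (hw i hi)

theorem posDef_sum_smul [PosSMulStrictMono α R] (hA : ∀ i ∈ s, (A i).PosDef)
    (hw : ∀ i ∈ s, 0 ≤ w i) (hw_ne : ∑ i ∈ s, w i ≠ 0) : (∑ i ∈ s, w i • A i).PosDef := by
  classical
  obtain ⟨j, hj, hwj⟩ := exists_ne_zero_of_sum_ne_zero hw_ne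
  rw [← add_sum_erase s _ hj]
  refine ((hA j hj).smul ((hw j hj).lt_of_ne' hwj)).add_posSemidef ?_
  exact posSemidef_sum_smul (fun i hi ↦ (hA i (mem_of_mem_erase hi)).posSemidef)
    fun i hi ↦ hw i (mem_of_mem_erase hi)

end WeightedSum

section Inverse

variable {m n 𝕜 : Type*} [Fintype m] [DecidableEq m]

theorem posSemidef_fromBlocks_conjTranspose_mul_inv_mul [Field 𝕜] [PartialOrder 𝕜] [StarRing 𝕜]
    [StarOrderedRing 𝕜] [Finite n] {A : Matrix m m 𝕜} (hA : A.PosDef) (B : Matrix m n 𝕜) :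
    (fromBlocks A B Bᴴ (Bᴴ * A⁻¹ * B)).PosSemidef := by
  have := hA.isUnit.invertible
  rw [hA.fromBlocks₁₁, sub_self]
  exact .zero

variable {ι α : Type*} [CommSemiring α] [PartialOrder α] [StarRing α] [StarOrderedRing α]
  [Field 𝕜] [PartialOrder 𝕜] [StarRing 𝕜] [StarOrderedRing 𝕜]
  [Algebra α 𝕜] [StarModule α 𝕜] [PosSMulStrictMono α 𝕜]
  {s : Finset ι} {w : ι → α} {A : ι → Matrix m m 𝕜}

theorem posSemidef_sum_smul_inv_sub_inv_sum_smul (hA : ∀ i ∈ s, (A i).PosDef)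
    (hw : ∀ i ∈ s, 0 ≤ w i) (hw_sum : ∑ i ∈ s, w i = 1) :
    (∑ i ∈ s, w i • (A i)⁻¹ - (∑ i ∈ s, w i • A i)⁻¹).PosSemidef := by
  have := (algebraMap α 𝕜).domain_nontrivial
  have hM : (∑ i ∈ s, w i • A i).PosDef := posDef_sum_smul hA hw (by simp [hw_sum])
  have := hM.isUnit.invertible
  have hsum : (∑ i ∈ s, w i • fromBlocks (A i) 1 1ᴴ (1ᴴ * (A i)⁻¹ * 1)).PosSemidef :=
    posSemidef_sum_smul
      (fun i hi ↦ posSemidef_fromBlocks_conjTranspose_mul_inv_mul (hA i hi) 1) hw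
  have hblock : (fromBlocks (∑ i ∈ s, w i • A i) 1 1ᴴ (∑ i ∈ s, w i • (A i)⁻¹)).PosSemidef := by
    simpa [fromBlocks_smul, sum_fromBlocks, ← sum_smul, hw_sum] using hsum
  simpa using (hM.fromBlocks₁₁ 1 _).mp hblock

theorem jensen_inverse_quadratic_form_general (hA : ∀ i ∈ s, (A i).PosDef)
    (hw : ∀ i ∈ s, 0 ≤ w i) (hw_sum : ∑ i ∈ s, w i = 1) (y : m → 𝕜) :
    (∑ i ∈ s, w i • A i).PosDef ∧
      star y ⬝ᵥ (∑ i ∈ s, w i • A i)⁻¹ *ᵥ y ≤ ∑ i ∈ s, w i • (star y ⬝ᵥ (A i)⁻¹ *ᵥ y) := by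
  have := (algebraMap α 𝕜).domain_nontrivial
  refine ⟨posDef_sum_smul hA hw (by simp [hw_sum]), ?_⟩
  have hgap := (posSemidef_sum_smul_inv_sub_inv_sum_smul hA hw hw_sum).dotProduct_mulVec_nonneg y
  simpa only [sub_mulVec, dotProduct_sub, sum_mulVec, dotProduct_sum, smul_mulVec, dotProduct_smul,
    sub_nonneg] using hgap

end Inverse

/-- Jensen inequality for the inverse quadratic form (direction of the RFF bias for
the data-fit term, finite-mixture form): for positive definite matrices `K i` and
nonnegative weights `w i` summing to one, the average `∑ i, w i • K i` is positive
definite and `yᵀ(∑ i, w i • K i)⁻¹ y ≤ ∑ i, w i ⬝ yᵀ(K i)⁻¹ y`. -/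
theorem jensen_inverse_quadratic_form
    (n : ℕ) (ι : Type*) [Fintype ι] [Nonempty ι]
    (K : ι → Matrix (Fin n) (Fin n) ℝ) (hK : ∀ i, (K i).PosDef)
    (w : ι → ℝ) (hw_nonneg : ∀ i, 0 ≤ w i) (hw_sum : ∑ i, w i = 1)
    (y : Fin n → ℝ) :
    (∑ i, w i • K i).PosDef ∧
    y ⬝ᵥ (∑ i, w i • K i)⁻¹ *ᵥ y ≤ ∑ i, w i * (y ⬝ᵥ (K i)⁻¹ *ᵥ y) :=
  jensen_inverse_quadratic_form_general (fun i _ ↦ hK i) (fun i _ ↦ hw_nonneg i) hw_sum y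
end

section
/- Telescoping bound for the data-fit term under a random-feature update (key estimate in the proof of Theorem 4): Let K be an n×n real symmetric positive semidefinite matrix, let φ, y ∈ ℝⁿ, let σ > 0, and let J ≥ 1 be a natural number. Define K' = (J/(J+1))·K + (1/(J+1))·(φφᵀ). Then both K + σ²·I and K' + σ²·I are positive definite, and yᵀ(K + σ²·I)⁻¹y − yᵀ(K' + σ²·I)⁻¹y ≤ ‖φ‖² · ‖y‖² / (σ⁴ · (J+1)). -/
open Matrix

/-!
In the Loewner order, `A ↦ A⁻¹` lies above its tangents: the defect
`A⁻¹(B - A)A⁻¹ - (A⁻¹ - B⁻¹)` is the congruence `(A⁻¹ - B⁻¹)B(A⁻¹ - B⁻¹)` of `B`. For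
`A = K + c` and `B = aK + bφφᴴ + c` with `a ≤ 1` we have `B - A ≤ bφφᴴ ≤ b‖φ‖²`, while
`A⁻² ≤ c⁻²`, so that `A⁻¹ - B⁻¹ ≤ b‖φ‖²/c²`; the bound is the quadratic form of this
inequality at `y`.
-/

section Loewner

open scoped ComplexOrder MatrixOrder

variable {𝕜 ι : Type*} [RCLike 𝕜] [DecidableEq ι]

theorem posDef_add_smul_one {K : Matrix ι ι 𝕜} (hK : K.PosSemidef) {c : 𝕜} (hc : 0 < c) :
    (K + c • (1 : Matrix ι ι 𝕜)).PosDef :=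
  PosDef.posSemidef_add hK (PosDef.one.smul hc)

variable [Fintype ι]

omit [DecidableEq ι] in
theorem star_dotProduct_mulVec_le_of_le {A B : Matrix ι ι 𝕜} (hAB : A ≤ B) (x : ι → 𝕜) :
    star x ⬝ᵥ A *ᵥ x ≤ star x ⬝ᵥ B *ᵥ x := by
  have h_nonneg := (Matrix.le_iff.mp hAB).dotProduct_mulVec_nonneg x
  rwa [sub_mulVec, dotProduct_sub, sub_nonneg] at h_nonneg

theorem inv_sub_inv_le_inv_mul_sub_mul_inv {A B : Matrix ι ι 𝕜} (hA : A.IsHermitian)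
    (hA_unit : IsUnit A) (hB : B.PosDef) : A⁻¹ - B⁻¹ ≤ A⁻¹ * (B - A) * A⁻¹ := by
  have hA_det := (isUnit_iff_isUnit_det A).mp hA_unit
  have hB_det := (isUnit_iff_isUnit_det B).mp hB.isUnit
  have h_defect : A⁻¹ * (B - A) * A⁻¹ - (A⁻¹ - B⁻¹) = (A⁻¹ - B⁻¹) * B * (A⁻¹ - B⁻¹) := by
    simp only [mul_sub, sub_mul, nonsing_inv_mul A hA_det, nonsing_inv_mul B hB_det,
      mul_nonsing_inv_cancel_right B A⁻¹ hB_det, one_mul]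
  rw [← sub_nonneg, h_defect]
  exact (hA.inv.sub hB.isHermitian.inv).isSelfAdjoint.conjugate_nonneg hB.posSemidef.nonneg

theorem vecMulVec_self_star_le_smul_one (φ : ι → 𝕜) :
    vecMulVec φ (star φ) ≤ (star φ ⬝ᵥ φ) • (1 : Matrix ι ι 𝕜) := by
  rcases eq_or_ne φ 0 with rfl | hφ
  · simp
  set P := vecMulVec φ (star φ) with hP
  set s := star φ ⬝ᵥ φ with hs
  have hs_nonneg : 0 ≤ s := dotProduct_star_self_nonneg φ
  have hs_ne : s ≠ 0 := dotProduct_star_self_eq_zero.not.mpr hφ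
  have hP_sq : P * P = s • P := by simp [hP, hs, vecMulVec_mul_vecMulVec]
  have hQ_herm : (s • 1 - P)ᴴ = s • 1 - P :=
    (PosSemidef.one.smul hs_nonneg).isHermitian.sub
      (posSemidef_vecMulVec_self_star φ).isHermitian
  -- `P / s` is the orthogonal projection onto the line of `φ`, so `1 - P / s` is one as well.
  have hQ_sq : (s • 1 - P)ᴴ * (s • 1 - P) = s • (s • 1 - P) := by
    rw [hQ_herm, sub_mul, mul_sub P, hP_sq]
    simp
  rw [Matrix.le_iff, ← inv_smul_smul₀ hs_ne (s • 1 - P), ← hQ_sq]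
  exact (posSemidef_conjTranspose_mul_self _).smul (inv_nonneg.mpr hs_nonneg)

theorem inv_add_smul_one_mul_self_le {K : Matrix ι ι 𝕜} (hK : K.PosSemidef) {c : 𝕜}
    (hc : 0 < c) :
    (K + c • (1 : Matrix ι ι 𝕜))⁻¹ * (K + c • (1 : Matrix ι ι 𝕜))⁻¹ ≤ (c ^ 2)⁻¹ • 1 := by
  set A := K + c • (1 : Matrix ι ι 𝕜) with hA_def
  have hA : A.PosDef := posDef_add_smul_one hK hc
  have hA_det := (isUnit_iff_isUnit_det A).mp hA.isUnit
  have h_sq : A * A = c ^ 2 • 1 + (K * K + (2 * c) • K) := by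
    simp only [hA_def, add_mul, mul_add, smul_mul_assoc, mul_smul_comm, one_mul, mul_one]
    module
  have h_sq_le : c ^ 2 • 1 ≤ A * A := by
    have hKK : 0 ≤ K * K := hK.isHermitian.isSelfAdjoint.mul_self_nonneg
    have hcK : 0 ≤ (2 * c) • K := (hK.smul (by positivity)).nonneg
    rw [h_sq]
    exact le_add_of_nonneg_right (add_nonneg hKK hcK)
  have h_conj : c ^ 2 • (A⁻¹ * A⁻¹) ≤ 1 := by
    have h := hA.isHermitian.inv.isSelfAdjoint.conjugate_le_conjugate h_sq_le
    simpa [← mul_assoc, nonsing_inv_mul A hA_det, mul_nonsing_inv A hA_det] using h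
  calc A⁻¹ * A⁻¹ = (c ^ 2)⁻¹ • c ^ 2 • (A⁻¹ * A⁻¹) :=
        (inv_smul_smul₀ (pow_ne_zero 2 hc.ne') _).symm
    _ ≤ (c ^ 2)⁻¹ • 1 :=
        smul_le_smul_of_nonneg_left h_conj (inv_nonneg.mpr (pow_nonneg hc.le 2))

theorem inv_add_smul_one_sub_inv_le {K Φ : Matrix ι ι 𝕜} (hK : K.PosSemidef)
    (hΦ : Φ.PosSemidef) {a b c r : 𝕜} (ha : 0 ≤ a) (ha_one : a ≤ 1) (hb : 0 ≤ b) (hc : 0 < c)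
    (hr : 0 ≤ r) (hΦr : Φ ≤ r • 1) :
    (K + c • (1 : Matrix ι ι 𝕜))⁻¹ - (a • K + b • Φ + c • (1 : Matrix ι ι 𝕜))⁻¹
      ≤ (b * r / c ^ 2) • 1 := by
  set A := K + c • (1 : Matrix ι ι 𝕜) with hA_def
  set B := a • K + b • Φ + c • (1 : Matrix ι ι 𝕜) with hB_def
  have hA : A.PosDef := posDef_add_smul_one hK hc
  have hB : B.PosDef := posDef_add_smul_one ((hK.smul ha).add (hΦ.smul hb)) hc
  have h_sub : B - A ≤ (b * r) • 1 := by
    calc B - A = b • Φ - (1 - a) • K := by rw [hA_def, hB_def]; module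
      _ ≤ b • Φ := sub_le_self _ (hK.smul (sub_nonneg.mpr ha_one)).nonneg
      _ ≤ b • r • 1 := smul_le_smul_of_nonneg_left hΦr hb
      _ = (b * r) • 1 := smul_smul b r 1
  calc A⁻¹ - B⁻¹ ≤ A⁻¹ * (B - A) * A⁻¹ :=
        inv_sub_inv_le_inv_mul_sub_mul_inv hA.isHermitian hA.isUnit hB
    _ ≤ A⁻¹ * ((b * r) • 1) * A⁻¹ :=
        hA.isHermitian.inv.isSelfAdjoint.conjugate_le_conjugate h_sub
    _ = (b * r) • (A⁻¹ * A⁻¹) := by rw [mul_smul_comm, mul_one, smul_mul_assoc]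
    _ ≤ (b * r) • (c ^ 2)⁻¹ • 1 :=
        smul_le_smul_of_nonneg_left (inv_add_smul_one_mul_self_le hK hc) (mul_nonneg hb hr)
    _ = (b * r / c ^ 2) • 1 := by rw [smul_smul, div_eq_mul_inv]

theorem data_fit_telescoping_bound_general {K : Matrix ι ι 𝕜} (hK : K.PosSemidef)
    (φ y : ι → 𝕜) {a b c : 𝕜} (ha : 0 ≤ a) (ha_one : a ≤ 1) (hb : 0 ≤ b) (hc : 0 < c) :
    (K + c • (1 : Matrix ι ι 𝕜)).PosDef ∧
    (a • K + b • vecMulVec φ (star φ) + c • (1 : Matrix ι ι 𝕜)).PosDef ∧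
    star y ⬝ᵥ (K + c • (1 : Matrix ι ι 𝕜))⁻¹ *ᵥ y
      - star y ⬝ᵥ (a • K + b • vecMulVec φ (star φ) + c • (1 : Matrix ι ι 𝕜))⁻¹ *ᵥ y
      ≤ b * (star φ ⬝ᵥ φ) * (star y ⬝ᵥ y) / c ^ 2 := by
  have hφ := posSemidef_vecMulVec_self_star φ
  refine ⟨posDef_add_smul_one hK hc,
    posDef_add_smul_one ((hK.smul ha).add (hφ.smul hb)) hc, ?_⟩
  have h_loewner := inv_add_smul_one_sub_inv_le hK hφ ha ha_one hb hc
    (dotProduct_star_self_nonneg φ) (vecMulVec_self_star_le_smul_one φ)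
  have h_form := star_dotProduct_mulVec_le_of_le h_loewner y
  rwa [sub_mulVec, dotProduct_sub, smul_mulVec, one_mulVec, dotProduct_smul, smul_eq_mul,
    div_mul_eq_mul_div] at h_form

end Loewner

/-- Telescoping bound for the data-fit term under a random-feature update: with
`K' = (J/(J+1))⬝K + (1/(J+1))⬝φφᵀ`, both `K + σ²I` and `K' + σ²I` are positive
definite and `yᵀ(K + σ²I)⁻¹y − yᵀ(K' + σ²I)⁻¹y ≤ ‖φ‖²‖y‖² / (σ⁴(J+1))`, where the
squared Euclidean norms are `φ ⬝ᵥ φ` and `y ⬝ᵥ y`. -/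
theorem data_fit_telescoping_bound
    (n : ℕ) (K : Matrix (Fin n) (Fin n) ℝ) (hK : K.PosSemidef)
    (φ y : Fin n → ℝ) (σ : ℝ) (hσ : 0 < σ) (J : ℕ) (hJ : 1 ≤ J) :
    (K + σ ^ 2 • (1 : Matrix (Fin n) (Fin n) ℝ)).PosDef ∧
    (((J : ℝ) / (J + 1)) • K + (1 / ((J : ℝ) + 1)) • vecMulVec φ φ
      + σ ^ 2 • (1 : Matrix (Fin n) (Fin n) ℝ)).PosDef ∧
    y ⬝ᵥ (K + σ ^ 2 • (1 : Matrix (Fin n) (Fin n) ℝ))⁻¹ *ᵥ y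
      - y ⬝ᵥ (((J : ℝ) / (J + 1)) • K + (1 / ((J : ℝ) + 1)) • vecMulVec φ φ
          + σ ^ 2 • (1 : Matrix (Fin n) (Fin n) ℝ))⁻¹ *ᵥ y
      ≤ (φ ⬝ᵥ φ) * (y ⬝ᵥ y) / (σ ^ 4 * ((J : ℝ) + 1)) := by
  obtain ⟨hA, hB, h_le⟩ := data_fit_telescoping_bound_general hK φ y
    (a := J / (J + 1)) (b := 1 / (J + 1)) (c := σ ^ 2) (by positivity)
    (div_le_one_of_le₀ (by linarith) (by positivity)) (by positivity) (by positivity)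
  exact ⟨hA, hB, h_le.trans_eq (by simp only [star_trivial]; field_simp)⟩
end

section
/- Determinant bound under a random-feature update (matrix-determinant-lemma step in the proof of Theorem 4): Let K be an n×n real symmetric positive semidefinite matrix, let φ ∈ ℝⁿ, let σ > 0, and let J ≥ 1 be a natural number. Define K' = (J/(J+1))·K + (1/(J+1))·(φφᵀ). Then det(K' + σ²·I) ≤ (1 + ‖φ‖² / (σ² · (J+1))) · det(K + σ²·I). -/
open Matrix

/-! By the matrix determinant lemma, the update `A + c • φφᴴ` multiplies `det A` by
`1 + c * φᴴA⁻¹φ`. For `A = a • K + s • 1` we have `s • 1 ≤ A`, and inversion reverses the Loewner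
order, so this factor is at most `1 + c * ‖φ‖² / s`. Finally `A ≤ K + s • 1` because `a ≤ 1`, and
the determinant is monotone on positive definite matrices: a positive semidefinite matrix is a sum
of rank-one terms `vvᴴ`, each of which, by the matrix determinant lemma again, can only increase
the determinant. -/

section CommRing

variable {n R : Type*} [Fintype n] [DecidableEq n] [CommRing R]

lemma det_add_vecMulVec {A : Matrix n n R} (hA : IsUnit A.det) (u v : n → R) :
    (A + vecMulVec u v).det = A.det * (1 + v ⬝ᵥ A⁻¹ *ᵥ u) := by
  rw [vecMulVec_eq Unit, det_add_replicateCol_mul_replicateRow hA, Matrix.mul_assoc,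
    ← replicateCol_mulVec, det_one_add_mul_comm, det_one_add_replicateCol_mul_replicateRow]

end CommRing

section LoewnerOrder

open scoped ComplexOrder MatrixOrder

variable {n 𝕜 : Type*} [RCLike 𝕜] {A B : Matrix n n 𝕜}

lemma posDef_of_posDef_of_le (hA : A.PosDef) (hAB : A ≤ B) : B.PosDef := by
  simpa only [add_sub_cancel] using hA.add_posSemidef hAB

variable [Fintype n]

lemma dotProduct_mulVec_le_of_le (hAB : A ≤ B) (v : n → 𝕜) :
    star v ⬝ᵥ A *ᵥ v ≤ star v ⬝ᵥ B *ᵥ v := by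
  rw [← sub_nonneg, ← dotProduct_sub, ← sub_mulVec]
  exact (le_iff.mp hAB).dotProduct_mulVec_nonneg v

variable [DecidableEq n]

-- Both inequalities say that the block matrix `[B 1; 1 A⁻¹]` is positive semidefinite, by taking
-- the Schur complement of either diagonal block.
lemma inv_le_inv_of_posDef_of_le (hA : A.PosDef) (hAB : A ≤ B) : B⁻¹ ≤ A⁻¹ := by
  have hB : B.PosDef := posDef_of_posDef_of_le hA hAB
  have := hA.isUnit.invertible
  have := hA.inv.isUnit.invertible
  have := hB.isUnit.invertible
  have hblock : (fromBlocks B 1 1ᴴ A⁻¹).PosSemidef := by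
    rw [PosDef.fromBlocks₂₂ B 1 hA.inv]
    simpa using le_iff.mp hAB
  simpa [le_iff] using (PosDef.fromBlocks₁₁ 1 A⁻¹ hB).mp hblock

lemma det_le_det_add_vecMulVec_self_star (hA : A.PosDef) (v : n → 𝕜) :
    A.det ≤ (A + vecMulVec v (star v)).det := by
  rw [det_add_vecMulVec hA.det_pos.ne'.isUnit]
  exact le_mul_of_one_le_right hA.det_pos.le <|
    le_add_of_nonneg_right (hA.inv.posSemidef.dotProduct_mulVec_nonneg v)

lemma det_le_det_of_posDef_of_le (hA : A.PosDef) (hAB : A ≤ B) : A.det ≤ B.det := by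
  obtain ⟨m, v, hv⟩ := posSemidef_iff_eq_sum_vecMulVec.mp (le_iff.mp hAB)
  have hpartial (t : Finset (Fin m)) :
      A.det ≤ (A + ∑ i ∈ t, vecMulVec (v i) (star (v i))).det := by
    induction t using Finset.induction_on with
    | empty => simp
    | insert i t hi ih =>
      have hpos : (A + ∑ j ∈ t, vecMulVec (v j) (star (v j))).PosDef :=
        hA.add_posSemidef (posSemidef_sum t fun j _ ↦ posSemidef_vecMulVec_self_star (v j))
      rw [Finset.sum_insert hi, add_comm (vecMulVec _ _), ← add_assoc]
      exact ih.trans (det_le_det_add_vecMulVec_self_star hpos (v i))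
  simpa only [← hv, add_sub_cancel] using hpartial Finset.univ

variable {c s : 𝕜}

lemma dotProduct_inv_mulVec_le_div (hs : 0 < s) (hsA : s • 1 ≤ A) (v : n → 𝕜) :
    star v ⬝ᵥ A⁻¹ *ᵥ v ≤ star v ⬝ᵥ v / s := by
  have hinv : (s • 1 : Matrix n n 𝕜)⁻¹ = s⁻¹ • 1 :=
    inv_eq_right_inv (by simp [smul_smul, hs.ne'])
  have hle := dotProduct_mulVec_le_of_le (inv_le_inv_of_posDef_of_le (PosDef.one.smul hs) hsA) v
  rwa [hinv, smul_mulVec, one_mulVec, dotProduct_smul, smul_eq_mul, inv_mul_eq_div] at hle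

lemma det_add_smul_vecMulVec_self_star_le (hc : 0 ≤ c) (hs : 0 < s) (hsA : s • 1 ≤ A)
    (v : n → 𝕜) :
    (A + c • vecMulVec v (star v)).det ≤ (1 + c * (star v ⬝ᵥ v / s)) * A.det := by
  have hA : A.PosDef := posDef_of_posDef_of_le (PosDef.one.smul hs) hsA
  rw [← smul_vecMulVec, det_add_vecMulVec hA.det_pos.ne'.isUnit, mulVec_smul, dotProduct_smul,
    smul_eq_mul, mul_comm]
  have hA_det := hA.det_pos.le
  gcongr
  exact dotProduct_inv_mulVec_le_div hs hsA v

theorem det_bound_random_feature_update_general {K : Matrix n n 𝕜} (hK : K.PosSemidef)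
    (φ : n → 𝕜) {a : 𝕜} (ha₀ : 0 ≤ a) (ha₁ : a ≤ 1) (hc : 0 ≤ c) (hs : 0 < s) :
    (a • K + c • vecMulVec φ (star φ) + s • 1).det
      ≤ (1 + c * (star φ ⬝ᵥ φ / s)) * (K + s • 1).det := by
  have hsA : s • 1 ≤ a • K + s • 1 := le_add_of_nonneg_left (hK.smul ha₀).nonneg
  have hAK : a • K + s • 1 ≤ K + s • 1 := by
    rw [add_le_add_iff_right, le_iff]
    simpa only [sub_smul, one_smul] using hK.smul (sub_nonneg.mpr ha₁)
  have hA : (a • K + s • 1).PosDef := posDef_of_posDef_of_le (PosDef.one.smul hs) hsA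
  have hfactor : 0 ≤ 1 + c * (star φ ⬝ᵥ φ / s) :=
    add_nonneg zero_le_one (mul_nonneg hc (div_nonneg (dotProduct_star_self_nonneg φ) hs.le))
  rw [add_right_comm]
  calc (a • K + s • 1 + c • vecMulVec φ (star φ)).det
      ≤ (1 + c * (star φ ⬝ᵥ φ / s)) * (a • K + s • 1).det :=
        det_add_smul_vecMulVec_self_star_le hc hs hsA φ
    _ ≤ (1 + c * (star φ ⬝ᵥ φ / s)) * (K + s • 1).det := by
        gcongr
        exact det_le_det_of_posDef_of_le hA hAK

end LoewnerOrder

/-- Determinant bound under a random-feature update (matrix-determinant-lemma step):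
with `K' = (J/(J+1))⬝K + (1/(J+1))⬝φφᵀ`,
`det(K' + σ²I) ≤ (1 + ‖φ‖² / (σ²(J+1))) ⬝ det(K + σ²I)`, where `‖φ‖² = φ ⬝ᵥ φ`. -/
theorem det_bound_random_feature_update
    (n : ℕ) (K : Matrix (Fin n) (Fin n) ℝ) (hK : K.PosSemidef)
    (φ : Fin n → ℝ) (σ : ℝ) (hσ : 0 < σ) (J : ℕ) (hJ : 1 ≤ J) :
    (((J : ℝ) / (J + 1)) • K + (1 / ((J : ℝ) + 1)) • vecMulVec φ φ
        + σ ^ 2 • (1 : Matrix (Fin n) (Fin n) ℝ)).det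
      ≤ (1 + (φ ⬝ᵥ φ) / (σ ^ 2 * ((J : ℝ) + 1)))
        * (K + σ ^ 2 • (1 : Matrix (Fin n) (Fin n) ℝ)).det := by
  have hJ_le : (J : ℝ) / (J + 1) ≤ 1 := div_le_one_of_le₀ (by linarith) (by positivity)
  rw [div_mul_eq_div_mul_one_div, mul_comm (φ ⬝ᵥ φ / σ ^ 2)]
  exact det_bound_random_feature_update_general hK φ (by positivity) hJ_le (by positivity)
    (by positivity)
end
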